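/- Fix d ∈ ℕ, d ≥ 1, and n ∈ ℕ, n ≥ 1. Then sup{ F_n(S) : S ⊆ ℤ^d, |S| = n^d } = max{ F_n(S) : S ⊆ {1,…,n^d}^d, |S| = n^d }; in particular the supremum over all n^d-element subsets of the integer lattice ℤ^d is attained on an n^d-element subset of the finite grid {1,…,n^d}^d. -/

import Mathlib

/-- Euclidean distance between two points of the integer lattice `ℤ^d`. -/
noncomputable def zdist {d : ℕ} (x y : Fin d → ℤ) : ℝ :=
  Real.sqrt (∑ i, ((x i : ℝ) - (y i : ℝ)) ^ 2)

/-- The grid `{1,…,n}^d` as a finset of `ℤ^d`. -/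
noncomputable def grid (d n : ℕ) : Finset (Fin d → ℤ) :=
  Fintype.piFinset fun _ => Finset.Icc 1 (n : ℤ)

/-- `F_n(S)`: the least Lipschitz constant (Euclidean metric) of a surjection of `S`
onto the grid `{1,…,n}^d`. -/
noncomputable def Fleast (d n : ℕ) (S : Finset (Fin d → ℤ)) : ℝ :=
  sInf {L : ℝ | ∃ f : (Fin d → ℤ) → (Fin d → ℤ),
    (∀ x ∈ S, f x ∈ grid d n) ∧
    (∀ y ∈ grid d n, ∃ x ∈ S, f x = y) ∧
    (∀ x ∈ S, ∀ y ∈ S, zdist (f x) (f y) ≤ L * zdist x y)}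

def lipSet (d n : ℕ) (S : Finset (Fin d → ℤ)) : Set ℝ :=
  {L : ℝ | ∃ f : (Fin d → ℤ) → (Fin d → ℤ),
    (∀ x ∈ S, f x ∈ grid d n) ∧
    (∀ y ∈ grid d n, ∃ x ∈ S, f x = y) ∧
    (∀ x ∈ S, ∀ y ∈ S, zdist (f x) (f y) ≤ L * zdist x y)}

lemma Fleast_eq (d n : ℕ) (S : Finset (Fin d → ℤ)) : Fleast d n S = sInf (lipSet d n S) := rfl

lemma zdist_nonneg {d : ℕ} (x y : Fin d → ℤ) : 0 ≤ zdist x y := Real.sqrt_nonneg _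

lemma zdist_self {d : ℕ} (x : Fin d → ℤ) : zdist x x = 0 := by simp [zdist]

lemma one_le_zdist {d : ℕ} {x y : Fin d → ℤ} (h : x ≠ y) : 1 ≤ zdist x y := by
  obtain ⟨i, hi⟩ := Function.ne_iff.mp h
  unfold zdist
  rw [Real.one_le_sqrt]
  have h1 : ((x i : ℝ) - (y i : ℝ)) ^ 2 ≤ ∑ i, ((x i : ℝ) - (y i : ℝ)) ^ 2 :=
    Finset.single_le_sum (f := fun i => ((x i : ℝ) - (y i : ℝ)) ^ 2)
      (fun i _ => sq_nonneg _) (Finset.mem_univ i)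
  refine le_trans ?_ h1
  have h2 : (1 : ℤ) ≤ (x i - y i) ^ 2 := by
    have : 0 < (x i - y i) ^ 2 := by
      have := sub_ne_zero.mpr hi
      positivity
    omega
  exact_mod_cast h2

lemma grid_card (d n : ℕ) : (grid d n).card = n ^ d := by
  simp [grid, Fintype.card_piFinset]

lemma lipSet_nonempty (d n : ℕ) (S : Finset (Fin d → ℤ)) (hS : S.card = n ^ d) :
    (lipSet d n S).Nonempty := by
  classical
  have e : S ≃ grid d n := Finset.equivOfCardEq (by rw [hS, grid_card])
  let f : (Fin d → ℤ) → (Fin d → ℤ) := fun x => if h : x ∈ S then (e ⟨x, h⟩ : Fin d → ℤ) else 0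
  have hf : ∀ x (h : x ∈ S), f x = e ⟨x, h⟩ := fun x h => by simp [f, h]
  refine ⟨∑ x ∈ S, ∑ y ∈ S, zdist (f x) (f y), f, ?_, ?_, ?_⟩
  · intro x hx
    rw [hf x hx]; exact (e ⟨x, hx⟩).2
  · intro y hy
    refine ⟨e.symm ⟨y, hy⟩, (e.symm ⟨y, hy⟩).2, ?_⟩
    rw [hf _ (e.symm ⟨y, hy⟩).2]; simp
  · intro x hx y hy
    by_cases hxy : x = y
    · subst hxy; simp [zdist_self]
    · have h1 : zdist (f x) (f y) ≤ ∑ y ∈ S, zdist (f x) (f y) :=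
        Finset.single_le_sum (f := fun y => zdist (f x) (f y)) (fun _ _ => zdist_nonneg _ _) hy
      have h2 : ∑ y ∈ S, zdist (f x) (f y) ≤ ∑ x ∈ S, ∑ y ∈ S, zdist (f x) (f y) :=
        Finset.single_le_sum (f := fun x => ∑ y ∈ S, zdist (f x) (f y))
          (fun _ _ => Finset.sum_nonneg fun _ _ => zdist_nonneg _ _) hx
      have h3 := one_le_zdist hxy
      have h4 := zdist_nonneg (f x) (f y)
      nlinarith

lemma Fleast_small (d n : ℕ) (S : Finset (Fin d → ℤ)) (hS : S.card ≤ 1) :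
    Fleast d n S = 0 := by
  rw [Fleast_eq]
  rcases (lipSet d n S).eq_empty_or_nonempty with h | ⟨L, f, h1, h2, h3⟩
  · rw [h, Real.sInf_empty]
  · have : lipSet d n S = Set.univ := by
      refine Set.eq_univ_of_forall fun M => ⟨f, h1, h2, fun x hx y hy => ?_⟩
      rw [Finset.card_le_one.mp hS x hx y hy]
      simp [zdist_self]
    rw [this, Real.sInf_univ]

lemma lipSet_bdd (d n : ℕ) (S : Finset (Fin d → ℤ)) (hS : 1 < S.card) :
    BddBelow (lipSet d n S) := by
  obtain ⟨x, hx, y, hy, hxy⟩ := Finset.one_lt_card.mp hS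
  refine ⟨0, ?_⟩
  rintro L ⟨f, -, -, h⟩
  have h1 := h x hx y hy
  have h2 := one_le_zdist hxy
  have h3 := zdist_nonneg (f x) (f y)
  by_contra hL
  push Not at hL
  nlinarith

def rk (T : Finset ℤ) (t : ℤ) : ℤ := ((T.filter (· ≤ t)).card : ℤ)

lemma rk_lip (T : Finset ℤ) {s t : ℤ} (h : s ≤ t) : rk T t - rk T s ≤ t - s := by
  have h1 : T.filter (· ≤ t) ⊆ T.filter (· ≤ s) ∪ Finset.Ioc s t := by
    intro a ha
    simp only [Finset.mem_filter, Finset.mem_union, Finset.mem_Ioc] at *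
    by_cases a ≤ s <;> grind
  have h2 := (Finset.card_le_card h1).trans (Finset.card_union_le _ _)
  rw [Int.card_Ioc] at h2
  unfold rk
  omega

lemma rk_mono (T : Finset ℤ) {s t : ℤ} (h : s ≤ t) : rk T s ≤ rk T t := by
  unfold rk
  exact_mod_cast Finset.card_le_card (by intro a; simp only [Finset.mem_filter]; grind)

lemma rk_strict (T : Finset ℤ) {s t : ℤ} (ht : t ∈ T) (h : s < t) : rk T s < rk T t := by
  unfold rk
  have : T.filter (· ≤ s) ⊂ T.filter (· ≤ t) := by
    rw [Finset.ssubset_iff_of_subset (by intro a; simp only [Finset.mem_filter]; grind)]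
    exact ⟨t, by simp [ht], by simp [h]⟩
  exact_mod_cast Finset.card_lt_card this

lemma rk_sq (T : Finset ℤ) (s t : ℤ) : (rk T s - rk T t) ^ 2 ≤ (s - t) ^ 2 := by
  rw [sq_le_sq]
  rcases le_total s t with h | h
  · have := rk_lip T h
    have := rk_mono T h
    rw [abs_of_nonpos (by omega), abs_of_nonpos (by omega)]; omega
  · have := rk_lip T h
    have := rk_mono T h
    rw [abs_of_nonneg (by omega), abs_of_nonneg (by omega)]; omega

lemma rk_inj (T : Finset ℤ) {s t : ℤ} (hs : s ∈ T) (ht : t ∈ T) (h : rk T s = rk T t) :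
    s = t := by
  rcases lt_trichotomy s t with h' | h' | h'
  · have := rk_strict T ht h'; omega
  · exact h'
  · have := rk_strict T hs h'; omega

lemma compress (d n : ℕ) (S : Finset (Fin d → ℤ)) (hS : S.card = n ^ d) :
    ∃ S' : Finset (Fin d → ℤ), S' ⊆ grid d (n ^ d) ∧ S'.card = n ^ d ∧
      Fleast d n S ≤ Fleast d n S' := by
  classical
  let T : Fin d → Finset ℤ := fun i => S.image (fun x => x i)
  have hT : ∀ x ∈ S, ∀ i, x i ∈ T i := fun x hx i => Finset.mem_image_of_mem (fun x => x i) hx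
  let g : (Fin d → ℤ) → (Fin d → ℤ) := fun x i => rk (T i) (x i)
  have hg : Set.InjOn g S := by
    intro x hx y hy hxy
    funext i
    exact rk_inj (T i) (hT x hx i) (hT y hy i) (congrFun hxy i)
  have hgl : ∀ x y, zdist (g x) (g y) ≤ zdist x y := by
    intro x y
    unfold zdist
    refine Real.sqrt_le_sqrt (Finset.sum_le_sum fun i _ => ?_)
    exact_mod_cast rk_sq (T i) (x i) (y i)
  have hc : (S.image g).card = n ^ d := by rw [Finset.card_image_of_injOn hg, hS]
  refine ⟨S.image g, ?_, hc, ?_⟩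
  · intro z hz
    obtain ⟨x, hx, rfl⟩ := Finset.mem_image.mp hz
    simp only [grid, Fintype.mem_piFinset, Finset.mem_Icc]
    intro i
    constructor
    · have : 0 < ((T i).filter (· ≤ x i)).card :=
        Finset.card_pos.mpr ⟨x i, by simp [hT x hx i]⟩
      change 1 ≤ (((T i).filter (· ≤ x i)).card : ℤ)
      omega
    · have : ((T i).filter (· ≤ x i)).card ≤ n ^ d :=
        (Finset.card_filter_le _ _).trans (Finset.card_image_le.trans hS.le)
      change (((T i).filter (· ≤ x i)).card : ℤ) ≤ _
      exact_mod_cast this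
  · by_cases h1 : n ^ d ≤ 1
    · rw [Fleast_small d n S (by omega), Fleast_small d n _ (by omega)]
    · rw [Fleast_eq, Fleast_eq]
      refine csInf_le_csInf (lipSet_bdd d n S (by omega)) (lipSet_nonempty d n _ hc) ?_
      rintro L ⟨f, h1, h2, h3⟩
      refine ⟨f ∘ g, fun x hx => h1 _ (Finset.mem_image_of_mem g hx), fun y hy => ?_,
        fun x hx y hy => ?_⟩
      · obtain ⟨z, hz, hzy⟩ := h2 y hy
        obtain ⟨x, hx, rfl⟩ := Finset.mem_image.mp hz
        exact ⟨x, hx, hzy⟩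
      · by_cases hxy : x = y
        · subst hxy; simp [zdist_self]
        · have h4 := h3 _ (Finset.mem_image_of_mem g hx) _ (Finset.mem_image_of_mem g hy)
          have h5 := one_le_zdist (fun h => hxy (hg hx hy h))
          have h6 := zdist_nonneg (f (g x)) (f (g y))
          have hL : 0 ≤ L := by
            by_contra hL
            push Not at hL
            nlinarith
          exact h4.trans (mul_le_mul_of_nonneg_left (hgl x y) hL)



/-- The supremum of `F_n` over all `n^d`-element subsets of `ℤ^d` is attained on an
`n^d`-element subset of the finite grid `{1,…,n^d}^d`. -/
theorem stmt_13 (d n : ℕ) (hd : 1 ≤ d) (hn : 1 ≤ n) :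
    ∃ S₀ : Finset (Fin d → ℤ),
      (∀ x ∈ S₀, ∀ i, 1 ≤ x i ∧ x i ≤ ((n ^ d : ℕ) : ℤ)) ∧
      S₀.card = n ^ d ∧
      (∀ S : Finset (Fin d → ℤ), S.card = n ^ d → Fleast d n S ≤ Fleast d n S₀) := by

  have hne : ((grid d (n ^ d)).powersetCard (n ^ d)).Nonempty := by
    rw [Finset.powersetCard_nonempty, grid_card]
    exact Nat.le_self_pow (by omega) _
  obtain ⟨S₀, h0, hmax⟩ := Finset.exists_max_image _ (Fleast d n) hne
  rw [Finset.mem_powersetCard] at h0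
  refine ⟨S₀, fun x hx i => ?_, h0.2, fun S hS => ?_⟩
  · have := h0.1 hx
    simp only [grid, Fintype.mem_piFinset, Finset.mem_Icc] at this
    exact this i
  · obtain ⟨S', h1, h2, h3⟩ := compress d n S hS
    exact h3.trans (hmax S' (Finset.mem_powersetCard.mpr ⟨h1, h2⟩))
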